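/- arXiv:2409.20240 — 2 statements merged into one kernel-verified Lean document; each statement's English description precedes it below -/
import Mathlib

section
/- Let Γ be a group and let (ρ, V) and (ρ', V') be finite-dimensional complex representations of Γ that are semisimple (V and V' are semisimple as modules over the monoid algebra ℂ[Γ]). If tr ρ(γ) = tr ρ'(γ) for all γ ∈ Γ, then ρ and ρ' are isomorphic: there exists a ℂ-linear isomorphism T : V → V' with T ∘ ρ(γ) = ρ'(γ) ∘ T for all γ ∈ Γ. -/
noncomputable section

/-!
By linearity, equal characters on the monoid mean equal traces on the whole monoid algebra, so the
question is about semisimple modules `M`, `N` over a `k`-algebra. Choose a homomorphism `f : M → N`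
whose range is as large as possible. Then `M ≅ ker f × range f` and `N ≅ C × range f`, and no
nonzero homomorphism links `ker f` and the complement `C`, as it could be added to `f` to enlarge
the range. By the density theorem some element of the algebra acts on `ker f` as the identity and on
`C` as zero; its traces on `M` and `N` differ by `dim (ker f)`, which therefore vanishes in
characteristic zero. Likewise `C = 0`, and `f` is an isomorphism.
-/

section SemisimpleModule

open LinearMap

variable {R M N : Type*} [Ring R] [AddCommGroup M] [Module R M] [AddCommGroup N] [Module R N]

theorem end_prod_apply_fst_zero [Subsingleton (M →ₗ[R] N)] [Subsingleton (N →ₗ[R] M)]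
    (g : Module.End R (M × N)) (x : M × N) : g (x.1, 0) = ((g x).1, 0) := by
  have h_inl : (g (x.1, 0)).2 = 0 := congr($(Subsingleton.elim (snd R M N ∘ₗ g ∘ₗ inl R M N) 0) x.1)
  have h_inr : (g (0, x.2)).1 = 0 := congr($(Subsingleton.elim (fst R M N ∘ₗ g ∘ₗ inr R M N) 0) x.2)
  have h_add : g x = g (x.1, 0) + g (0, x.2) := by rw [← map_add]; simp
  ext
  · simp [h_add, h_inr]
  · exact h_inl

variable [IsSemisimpleModule R M] [IsSemisimpleModule R N]

instance isSemisimpleModule_prod : IsSemisimpleModule R (M × N) := by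
  have h_sup := IsSemisimpleModule.sup (IsSemisimpleModule.range (inl R M N))
    (IsSemisimpleModule.range (inr R M N))
  rw [sup_range_inl_inr] at h_sup
  exact IsSemisimpleModule.congr Submodule.topEquiv.symm

theorem subsingleton_linearMap_symm [Subsingleton (M →ₗ[R] N)] : Subsingleton (N →ₗ[R] M) := by
  refine subsingleton_of_forall_eq 0 fun g ↦ ?_
  obtain ⟨s, hs⟩ := IsSemisimpleModule.lifting_property g.rangeRestrict g.surjective_rangeRestrict
    LinearMap.id
  obtain ⟨t, ht⟩ := IsSemisimpleModule.extension_property (range g).subtype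
    (Submodule.subtype_injective _) s
  have hs_zero : s = 0 := by rw [← ht, Subsingleton.elim t 0, zero_comp]
  ext n
  simpa [hs_zero] using congr(($hs (g.rangeRestrict n) : M)).symm

theorem exists_linearMap_isCompl_range_subsingleton [IsNoetherian R N] :
    ∃ (f : M →ₗ[R] N) (C : Submodule R N), IsCompl (range f) C ∧ Subsingleton (ker f →ₗ[R] C) := by
  obtain ⟨_, ⟨f, rfl⟩, hf_max⟩ := set_has_maximal_iff_noetherian.mpr ‹IsNoetherian R N›
    (Set.range (range : (M →ₗ[R] N) → Submodule R N)) (Set.range_nonempty _)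
  obtain ⟨C, hC⟩ := exists_isCompl (range f)
  obtain ⟨D, hD⟩ := exists_isCompl (ker f)
  refine ⟨f, C, hC, subsingleton_of_forall_eq 0 fun h ↦ ?_⟩
  let f' : M →ₗ[R] N := ofIsCompl hD (C.subtype ∘ₗ h) (f.domRestrict D)
  have h_range_le : range f ≤ range f' := by
    rw [range_ofIsCompl, range_domRestrict, Submodule.map_eq_range_iff.mpr hD.symm.codisjoint]
    exact le_sup_right
  have h_range_eq : range f = range f' := eq_of_le_of_not_lt h_range_le (hf_max _ ⟨f', rfl⟩)
  ext x
  have hx : (h x : N) ∈ range f := h_range_eq ▸ ⟨x, ofIsCompl_apply_left hD x⟩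
  exact Submodule.disjoint_def.mp hC.disjoint _ hx (h x).2

theorem exists_smul_eq_self_and_smul_eq_zero [Subsingleton (M →ₗ[R] N)]
    [Module.Finite (Module.End R (M × N)) (M × N)] :
    ∃ a : R, (∀ m : M, a • m = m) ∧ ∀ n : N, a • n = 0 := by
  have := subsingleton_linearMap_symm (R := R) (M := M) (N := N)
  let p : Module.End (Module.End R (M × N)) (M × N) :=
    { toFun := fun x ↦ (x.1, 0)
      map_add' := fun x y ↦ by simp
      map_smul' := fun g x ↦ (end_prod_apply_fst_zero g x).symm }
  obtain ⟨a, ha⟩ := Module.Finite.toModuleEnd_moduleEnd_surjective p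
  exact ⟨a, fun m ↦ congr(($ha (m, 0)).1), fun n ↦ congr(($ha (0, n)).2)⟩

end SemisimpleModule

section Character

variable {k A M N : Type*} [CommRing k] [Ring A] [Algebra k A]
  [AddCommGroup M] [Module k M] [Module A M] [IsScalarTower k A M]
  [AddCommGroup N] [Module k N] [Module A N] [IsScalarTower k A N]

variable (k A M) in
/-- The character of a module `M` over a `k`-algebra `A`, as a linear form on `A`: the trace over
`k` of the action on `M`. It is only meaningful when `M` has a finite basis over `k`, since the
trace is `0` otherwise. -/
def moduleCharacter : A →ₗ[k] k :=
  LinearMap.trace k M ∘ₗ (Algebra.lsmul k k M).toLinearMap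

theorem moduleCharacter_apply (a : A) :
    moduleCharacter k A M a = LinearMap.trace k M (Algebra.lsmul k k M a) :=
  rfl

theorem moduleCharacter_congr (e : M ≃ₗ[A] N) : moduleCharacter k A M = moduleCharacter k A N := by
  refine LinearMap.ext fun a ↦ ?_
  have h_conj : (e.restrictScalars k).conj (Algebra.lsmul k k M a) = Algebra.lsmul k k N a := by
    ext n
    simp [LinearEquiv.conj_apply]
  rw [moduleCharacter_apply, moduleCharacter_apply, ← h_conj, LinearMap.trace_conj']

theorem moduleCharacter_prod [Module.Free k M] [Module.Finite k M] [Module.Free k N]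
    [Module.Finite k N] :
    moduleCharacter k A (M × N) = moduleCharacter k A M + moduleCharacter k A N := by
  refine LinearMap.ext fun a ↦ ?_
  exact LinearMap.trace_prodMap' (Algebra.lsmul k k M a) (Algebra.lsmul k k N a)

end Character

section SemisimpleCharacter

variable {k A M N : Type*} [Field k] [Ring A] [Algebra k A]
  [AddCommGroup M] [Module k M] [Module A M] [IsScalarTower k A M] [FiniteDimensional k M]
  [AddCommGroup N] [Module k N] [Module A N] [IsScalarTower k A N]

instance finiteDimensional_submodule_of_isScalarTower (p : Submodule A M) :
    FiniteDimensional k p :=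
  inferInstanceAs (FiniteDimensional k (p.restrictScalars k))

theorem moduleCharacter_eq_add_of_isCompl {p q : Submodule A M} (h : IsCompl p q) :
    moduleCharacter k A M = moduleCharacter k A p + moduleCharacter k A q := by
  rw [← moduleCharacter_congr (Submodule.prodEquivOfIsCompl p q h), moduleCharacter_prod]

theorem moduleCharacter_eq_ker_add_range [IsSemisimpleModule A M] (f : M →ₗ[A] N) :
    moduleCharacter k A M =
      moduleCharacter k A (LinearMap.ker f) + moduleCharacter k A (LinearMap.range f) := by
  obtain ⟨D, hD⟩ := exists_isCompl (LinearMap.ker f)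
  let e : D ≃ₗ[A] LinearMap.range f :=
    (Submodule.quotientEquivOfIsCompl _ _ hD).symm.trans f.quotKerEquivRange
  rw [moduleCharacter_eq_add_of_isCompl hD, moduleCharacter_congr e]

variable [CharZero k] [FiniteDimensional k N] [IsSemisimpleModule A M]
  [IsSemisimpleModule A N]

theorem subsingleton_of_moduleCharacter_eq [Subsingleton (M →ₗ[A] N)]
    (h : moduleCharacter k A M = moduleCharacter k A N) : Subsingleton M := by
  have : Module.Finite (Module.End A (M × N)) (M × N) := .of_restrictScalars_finite k _ _
  obtain ⟨a, ha_M, ha_N⟩ := exists_smul_eq_self_and_smul_eq_zero (R := A) (M := M) (N := N)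
  have h_M : Algebra.lsmul k k M a = LinearMap.id := LinearMap.ext ha_M
  have h_N : Algebra.lsmul k k N a = 0 := LinearMap.ext ha_N
  have h_finrank : (Module.finrank k M : k) = 0 := by
    simpa only [moduleCharacter_apply, h_M, h_N, LinearMap.trace_id, map_zero] using congr($h a)
  exact Module.finrank_zero_iff.mp (Nat.cast_eq_zero.mp h_finrank)

theorem nonempty_linearEquiv_of_moduleCharacter_eq
    (h : moduleCharacter k A M = moduleCharacter k A N) : Nonempty (M ≃ₗ[A] N) := by
  have : IsNoetherian A N := isNoetherian_of_tower k inferInstance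
  obtain ⟨f, C, hC, _⟩ := exists_linearMap_isCompl_range_subsingleton (R := A) (M := M) (N := N)
  have h_char : moduleCharacter k A (LinearMap.ker f) = moduleCharacter k A C := by
    rw [moduleCharacter_eq_ker_add_range f, moduleCharacter_eq_add_of_isCompl hC, add_comm] at h
    exact add_left_cancel h
  have : Subsingleton (C →ₗ[A] LinearMap.ker f) := subsingleton_linearMap_symm
  have h_ker : Subsingleton (LinearMap.ker f) := subsingleton_of_moduleCharacter_eq h_char
  have h_C : Subsingleton C := subsingleton_of_moduleCharacter_eq h_char.symm
  refine ⟨.ofBijective f ⟨LinearMap.ker_eq_bot.mp ?_, LinearMap.range_eq_top.mp ?_⟩⟩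
  · exact Submodule.subsingleton_iff_eq_bot.mp h_ker
  · exact eq_top_of_isCompl_bot (Submodule.subsingleton_iff_eq_bot.mp h_C ▸ hC)

end SemisimpleCharacter

section Representation

variable {k G V W : Type*} [Field k] [Monoid G] [AddCommGroup V] [Module k V]
  [AddCommGroup W] [Module k W]

theorem moduleCharacter_asModule_single (ρ : Representation k G V) (g : G) :
    moduleCharacter k (MonoidAlgebra k G) ρ.asModule (MonoidAlgebra.single g 1) =
      ρ.character g := by
  have h_conj : ρ.asModuleEquiv.conj
      (Algebra.lsmul k k ρ.asModule (MonoidAlgebra.single g (1 : k))) = ρ g := by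
    ext v
    rw [LinearEquiv.conj_apply_apply, Algebra.lsmul_coe, Representation.asModuleEquiv_map_smul,
      LinearEquiv.apply_symm_apply, Representation.asAlgebraHom_single_one]
  rw [moduleCharacter_apply, Representation.character, ← h_conj, LinearMap.trace_conj']

theorem statement8_general [CharZero k] [FiniteDimensional k V] [FiniteDimensional k W]
    (ρ : Representation k G V) (σ : Representation k G W)
    [IsSemisimpleModule (MonoidAlgebra k G) ρ.asModule]
    [IsSemisimpleModule (MonoidAlgebra k G) σ.asModule]
    (h : ρ.character = σ.character) : Nonempty (ρ.Equiv σ) := by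
  have h_char : moduleCharacter k (MonoidAlgebra k G) ρ.asModule =
      moduleCharacter k (MonoidAlgebra k G) σ.asModule := by
    refine MonoidAlgebra.lhom_ext' fun g ↦ LinearMap.ext_ring ?_
    simpa only [LinearMap.comp_apply, MonoidAlgebra.lsingle_apply,
      moduleCharacter_asModule_single] using congr_fun h g
  obtain ⟨e⟩ := nonempty_linearEquiv_of_moduleCharacter_eq h_char
  let φ := (Representation.IntertwiningMap.equivLinearMapAsModule ρ σ).symm e.toLinearMap
  exact ⟨.mk (.ofBijective φ.toLinearMap e.bijective) φ.isIntertwining'⟩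

end Representation

/-- Two finite-dimensional semisimple complex representations of a group `Γ` with equal
trace characters are isomorphic.  Semisimplicity is expressed as semisimplicity of the
associated modules over the monoid algebra `ℂ[Γ]`, and an isomorphism is a `ℂ`-linear
equivalence intertwining the two actions. -/
theorem statement8 (Γ : Type) [Group Γ]
    (V V' : Type) [AddCommGroup V] [Module ℂ V] [FiniteDimensional ℂ V]
    [AddCommGroup V'] [Module ℂ V'] [FiniteDimensional ℂ V']
    (ρ : Representation ℂ Γ V) (ρ' : Representation ℂ Γ V')
    (hρ : IsSemisimpleModule (MonoidAlgebra ℂ Γ) ρ.asModule)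
    (hρ' : IsSemisimpleModule (MonoidAlgebra ℂ Γ) ρ'.asModule)
    (htr : ∀ γ : Γ, LinearMap.trace ℂ V (ρ γ) = LinearMap.trace ℂ V' (ρ' γ)) :
    ∃ T : V ≃ₗ[ℂ] V', ∀ (γ : Γ) (v : V), T (ρ γ v) = ρ' γ (T v) := by
  obtain ⟨φ⟩ := statement8_general ρ ρ' (funext htr)
  exact ⟨φ.toLinearEquiv, φ.isIntertwining⟩

end
end

section
/- For every n ≥ 1, the special linear group SL_n(ℂ) is acceptable: for every finite group Γ and homomorphisms φ, φ' : Γ → SL_n(ℂ) such that φ(γ) and φ'(γ) are conjugate in SL_n(ℂ) for every γ ∈ Γ, there exists g ∈ SL_n(ℂ) with φ'(γ) = g φ(γ) g⁻¹ for all γ ∈ Γ. -/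
/-!
Locally conjugate homomorphisms into `SL_n` have the same trace at every element, so the two
representations on column vectors have the same character. In characteristic zero the character
determines a finite-dimensional representation of a finite group up to isomorphism: if `V ≠ 0` and
`χ_V = χ_W`, then `dim Hom(V, W) = dim End(V) > 0` gives a nonzero intertwining map `f : V → W`.
By Maschke, `V ≅ ker f × range f` and `W ≅ D × range f` for some `D`, hence `ker f` and `D` have the
same character, and induction on the dimension yields `ker f ≅ D`. The resulting element of `GL_n`
conjugates one homomorphism into the other and, over an algebraically closed field, can be rescaled
to have determinant one.
-/

noncomputable section

open Matrix Module Representation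

section Decomposition

variable {k G V W : Type*} [CommRing k] [Monoid G] [AddCommGroup V] [Module k V]
  [AddCommGroup W] [Module k W] {ρ : Representation k G V} {σ : Representation k G W}

theorem isCompl_toSubmodule {U U' : Subrepresentation ρ} (h : IsCompl U U') :
    IsCompl U.toSubmodule U'.toSubmodule :=
  .of_eq (congrArg Subrepresentation.toSubmodule h.inf_eq_bot)
    (congrArg Subrepresentation.toSubmodule h.sup_eq_top)

/-- The internal direct sum decomposition of a representation given by two complementary
subrepresentations, as an equivalence with their external direct sum. -/
def prodEquivOfIsCompl {U U' : Subrepresentation ρ} (h : IsCompl U U') :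
    (U.toRepresentation.prod U'.toRepresentation).Equiv ρ :=
  .mk (Submodule.prodEquivOfIsCompl _ _ (isCompl_toSubmodule h)) fun g ↦
    LinearMap.ext fun x ↦ (map_add (ρ g) (x.1 : V) x.2).symm

/-- The first isomorphism theorem for representations, with a complement of the kernel in place of
the quotient by it. -/
def kerComplementEquivRange (f : ρ.IntertwiningMap σ) {C : Subrepresentation ρ}
    (h : IsCompl C f.ker) : C.toRepresentation.Equiv f.range.toRepresentation :=
  .mk (f.toLinearMap.kerComplementEquivRange (isCompl_toSubmodule h)) fun g ↦
    LinearMap.ext fun x ↦ Subtype.ext (f.isIntertwining _ _ g x)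

/-- The direct sum of two equivalences of representations. -/
def prodCongr {V' W' : Type*} [AddCommGroup V'] [Module k V'] [AddCommGroup W'] [Module k W']
    {ρ' : Representation k G V'} {σ' : Representation k G W'} (e : ρ.Equiv ρ') (e' : σ.Equiv σ') :
    (ρ.prod σ).Equiv (ρ'.prod σ') :=
  .mk (e.toLinearEquiv.prodCongr e'.toLinearEquiv) fun g ↦
    LinearMap.ext fun x ↦ Prod.ext (e.isIntertwining _ _ g x.1) (e'.isIntertwining _ _ g x.2)

end Decomposition

section Character

variable {k G V W : Type*} [Field k] [AddCommGroup V] [Module k V] [FiniteDimensional k V]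
  [AddCommGroup W] [Module k W] [FiniteDimensional k W]

theorem character_prod [Monoid G] (ρ : Representation k G V) (σ : Representation k G W) :
    (ρ.prod σ).character = ρ.character + σ.character :=
  funext fun g ↦ LinearMap.trace_prodMap' (ρ g) (σ g)

theorem character_eq_add_of_isCompl [Monoid G] {ρ : Representation k G V}
    {U U' : Subrepresentation ρ} (h : IsCompl U U') :
    ρ.character = U.toRepresentation.character + U'.toRepresentation.character := by
  rw [← char_iso (prodEquivOfIsCompl h), character_prod]

theorem finrank_eq_of_character_eq [CharZero k] [Monoid G] {ρ : Representation k G V}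
    {σ : Representation k G W} (h : ρ.character = σ.character) : finrank k V = finrank k W := by
  have h1 := congrFun h 1
  rw [char_one, char_one] at h1
  exact_mod_cast h1

variable [CharZero k] [Group G] [Finite G]

theorem finrank_intertwiningMap_eq_of_character_eq {U : Type*} [AddCommGroup U] [Module k U]
    [FiniteDimensional k U] (τ : Representation k G U) {ρ : Representation k G V}
    {σ : Representation k G W} (h : ρ.character = σ.character) :
    finrank k (τ.IntertwiningMap ρ) = finrank k (τ.IntertwiningMap σ) := by
  have := Fintype.ofFinite G
  have : Invertible (Nat.card G : k) := invertibleOfNonzero (NeZero.ne _)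
  apply Nat.cast_injective (R := k)
  rw [← card_inv_mul_sum_char_mul_char_eq_finrank, ← card_inv_mul_sum_char_mul_char_eq_finrank, h]

theorem exists_intertwiningMap_ne_zero [Nontrivial V] {ρ : Representation k G V}
    {σ : Representation k G W} (h : ρ.character = σ.character) :
    ∃ f : ρ.IntertwiningMap σ, f ≠ 0 := by
  have : Nontrivial (ρ.IntertwiningMap ρ) := by
    obtain ⟨v, hv⟩ := exists_ne (0 : V)
    exact ⟨⟨1, 0, fun h ↦ hv (DFunLike.congr_fun h v)⟩⟩
  have : 0 < finrank k (ρ.IntertwiningMap σ) :=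
    finrank_intertwiningMap_eq_of_character_eq ρ h ▸ finrank_pos
  have := nontrivial_of_finrank_pos this
  exact exists_ne 0

theorem nonempty_equiv_of_character_eq {V W : Type*} [AddCommGroup V] [Module k V]
    [FiniteDimensional k V] [AddCommGroup W] [Module k W] [FiniteDimensional k W]
    {ρ : Representation k G V} {σ : Representation k G W} (h : ρ.character = σ.character) :
    Nonempty (ρ.Equiv σ) := by
  cases subsingleton_or_nontrivial V with
  | inl _ =>
    have : Subsingleton W := finrank_zero_iff.mp <|
      (finrank_eq_of_character_eq h).symm.trans finrank_zero_of_subsingleton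
    exact ⟨.mk 0 fun _ ↦ Subsingleton.elim _ _⟩
  | inr _ =>
    obtain ⟨f, hf⟩ := exists_intertwiningMap_ne_zero h
    obtain ⟨C, hC⟩ := exists_isCompl f.ker
    obtain ⟨D, hD⟩ := exists_isCompl f.range
    have hker : f.ker.toRepresentation.character = D.toRepresentation.character := by
      rw [character_eq_add_of_isCompl hC, character_eq_add_of_isCompl hD.symm,
        char_iso (kerComplementEquivRange f hC.symm)] at h
      exact add_right_cancel h
    have : finrank k f.ker.toSubmodule < finrank k V := Submodule.finrank_lt fun htop ↦
      hf (IntertwiningMap.ext (LinearMap.ker_eq_top.mp htop))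
    obtain ⟨e⟩ := nonempty_equiv_of_character_eq hker
    exact ⟨(prodEquivOfIsCompl hC).symm.trans <|
      (prodCongr e (kerComplementEquivRange f hC.symm)).trans (prodEquivOfIsCompl hD.symm)⟩
termination_by finrank k V

end Character

section Matrix

variable {ι K Γ : Type*} [Fintype ι] [DecidableEq ι] [Field K]

/-- The representation on column vectors afforded by a matrix representation. -/
def columnRepresentation [Monoid Γ] (A : Γ →* Matrix ι ι K) : Representation K Γ (ι → K) :=
  (toLinAlgEquiv' : Matrix ι ι K ≃ₐ[K] _).toMonoidHom.comp A

theorem character_columnRepresentation [Monoid Γ] (A : Γ →* Matrix ι ι K) (γ : Γ) :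
    (columnRepresentation A).character γ = (A γ).trace :=
  trace_toLin'_eq _

theorem exists_GL_semiconjBy_of_trace_eq [CharZero K] [Group Γ] [Finite Γ]
    {A B : Γ →* Matrix ι ι K} (h : ∀ γ, (A γ).trace = (B γ).trace) :
    ∃ P : GL ι K, ∀ γ, SemiconjBy (P : Matrix ι ι K) (A γ) (B γ) := by
  have hchar : (columnRepresentation A).character = (columnRepresentation B).character :=
    funext fun γ ↦ by simpa only [character_columnRepresentation] using h γ
  obtain ⟨e⟩ := nonempty_equiv_of_character_eq hchar
  obtain ⟨P, hP⟩ := GeneralLinearGroup.toLin.surjective (.ofLinearEquiv e.toLinearEquiv)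
  have hP' : toLin' (P : Matrix ι ι K) = e.toLinearMap := congrArg Units.val hP
  refine ⟨P, fun γ ↦ toLin'.injective ?_⟩
  rw [toLin'_mul, toLin'_mul, hP']
  exact e.isIntertwining' γ

theorem exists_specialLinearGroup_eq_smul [IsAlgClosed K] (P : GL ι K) :
    ∃ (g : SpecialLinearGroup ι K) (z : K), (g : Matrix ι ι K) = z • (P : Matrix ι ι K) := by
  cases isEmpty_or_nonempty ι with
  | inl _ => exact ⟨1, 1, Subsingleton.elim _ _⟩
  | inr _ =>
    obtain ⟨z, hz⟩ := IsAlgClosed.exists_pow_nat_eq (P⁻¹.det : K) (Fintype.card_pos (α := ι))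
    have hdet : (z • (P : Matrix ι ι K)).det = 1 := by
      rw [det_smul, hz, map_inv, ← GeneralLinearGroup.val_det_apply, Units.inv_mul]
    exact ⟨⟨_, hdet⟩, z, rfl⟩

theorem statement10_general [IsAlgClosed K] [CharZero K] [Group Γ] [Finite Γ]
    (φ φ' : Γ →* SpecialLinearGroup ι K)
    (htrace : ∀ γ, (φ γ : Matrix ι ι K).trace = (φ' γ : Matrix ι ι K).trace) :
    ∃ g : SpecialLinearGroup ι K, ∀ γ, φ' γ = g * φ γ * g⁻¹ := by
  let coe : SpecialLinearGroup ι K →* Matrix ι ι K := (Units.coeHom _).comp SpecialLinearGroup.toGL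
  obtain ⟨P, hP⟩ := exists_GL_semiconjBy_of_trace_eq (A := coe.comp φ) (B := coe.comp φ') htrace
  obtain ⟨g, z, hg⟩ := exists_specialLinearGroup_eq_smul P
  have hgγ (γ : Γ) : (φ' γ : Matrix ι ι K) * g = g * φ γ := by
    have hPγ : (P : Matrix ι ι K) * φ γ = φ' γ * P := hP γ
    rw [hg, Matrix.mul_smul, Matrix.smul_mul, hPγ]
  exact ⟨g, fun γ ↦ eq_mul_inv_of_mul_eq (Subtype.ext (hgγ γ))⟩

end Matrix

/-- For every `n ≥ 1`, the group `SL_n(ℂ)` is acceptable: any two pointwise (locally)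
conjugate homomorphisms from a finite group into `SL_n(ℂ)` are globally conjugate. -/
theorem statement10 (n : ℕ) (hn : 1 ≤ n) (Γ : Type) [Group Γ] [Finite Γ]
    (φ φ' : Γ →* Matrix.SpecialLinearGroup (Fin n) ℂ)
    (hloc : ∀ γ : Γ, ∃ g : Matrix.SpecialLinearGroup (Fin n) ℂ, φ' γ = g * φ γ * g⁻¹) :
    ∃ g : Matrix.SpecialLinearGroup (Fin n) ℂ, ∀ γ : Γ, φ' γ = g * φ γ * g⁻¹ := by
  refine statement10_general φ φ' fun γ ↦ ?_
  obtain ⟨g, hg⟩ := hloc γ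
  rw [hg]
  exact (trace_units_conj (SpecialLinearGroup.toGL g) (φ γ)).symm

end
end
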